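/- Let M be a finite-dimensional simple module over a ℂ-algebra A, Ĥ a finite abelian group of automorphisms of A with M^η ≅ M for all η ∈ Ĥ, and M = ⊕_{h∈H} N ⊗ V^h the isotypic decomposition with respect to the cyclotomic quantum torus action. For each nonzero n ∈ N, define M_h = Σ_{a∈ℤ^r} T^a(n) ⊗ V^{h+γ(a)}. Then {M_h | h ∈ H} is a thin H-covering of M, and every thin H-covering of M is equivalent to one of this form. In particular, equivalence classes of thin H-coverings are parametrized by one-dimensional subspaces of N. -/

import Mathlib

open DirectSum TensorProduct

/-- The monomial `S^a = S₁^{a₁} ⋯ S_r^{a_r}`. -/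
noncomputable def Sprod {N : Type*} [AddCommGroup N] [Module ℂ N]
    {r : ℕ} (S : Fin r → N ≃ₗ[ℂ] N) (a : Fin r → ℤ) : N ≃ₗ[ℂ] N :=
  (List.ofFn fun i => S i ^ a i).prod

/-- The quantum-torus generator `t_j` acting on `M = ⊕_{p∈H} N ⊗ V^p` by
`S j ⊗ p(η_j)·id` on the `p`-component. -/
noncomputable def torusOp {Hhat : Type*} [CommGroup Hhat] [DecidableEq (Hhat →* ℂˣ)]
    {N : Type*} [AddCommGroup N] [Module ℂ N]
    (V : (Hhat →* ℂˣ) → Type*) [∀ p, AddCommGroup (V p)] [∀ p, Module ℂ (V p)]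
    {r : ℕ} (η : Fin r → Hhat) (S : Fin r → N ≃ₗ[ℂ] N) (j : Fin r) :
    (⨁ p : Hhat →* ℂˣ, N ⊗[ℂ] V p) →ₗ[ℂ] ⨁ p : Hhat →* ℂˣ, N ⊗[ℂ] V p :=
  DirectSum.toModule ℂ (Hhat →* ℂˣ) _ fun p =>
    (DirectSum.lof ℂ (Hhat →* ℂˣ) (fun p => N ⊗[ℂ] V p) p).comp
      (TensorProduct.map (S j : N →ₗ[ℂ] N) ((p (η j) : ℂ) • LinearMap.id))

/-- The component `M_h = Σ_{a∈ℤ^r} T^a(n) ⊗ V^{h·γ(a)}` of the thin covering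
attached to a nonzero vector `n ∈ N`. -/
noncomputable def thinFam {Hhat : Type*} [CommGroup Hhat] [DecidableEq (Hhat →* ℂˣ)]
    {N : Type*} [AddCommGroup N] [Module ℂ N]
    (V : (Hhat →* ℂˣ) → Type*) [∀ p, AddCommGroup (V p)] [∀ p, Module ℂ (V p)]
    {r : ℕ} (S : Fin r → N ≃ₗ[ℂ] N) (γ : (Fin r → ℤ) → (Hhat →* ℂˣ))
    (n : N) (h : Hhat →* ℂˣ) : Submodule ℂ (⨁ p : Hhat →* ℂˣ, N ⊗[ℂ] V p) :=
  ⨆ a : Fin r → ℤ, LinearMap.range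
    ((DirectSum.lof ℂ (Hhat →* ℂˣ) (fun p => N ⊗[ℂ] V p) (h * γ a)).comp
      ((TensorProduct.mk ℂ N (V (h * γ a))) ((Sprod S a) n)))

/-- A covering of the module `(M, ρ)` with respect to the `H`-grading `𝒜`. -/
def IsCoveringRho {Hhat A M : Type*} [CommGroup Hhat] [Ring A] [Algebra ℂ A]
    [AddCommGroup M] [Module ℂ M]
    (𝒜 : (Hhat →* ℂˣ) → Submodule ℂ A) (ρ : A →ₐ[ℂ] Module.End ℂ M)
    (C : (Hhat →* ℂˣ) → Submodule ℂ M) : Prop :=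
  (⨆ h, C h) = ⊤ ∧ ∀ g h : Hhat →* ℂˣ, ∀ a ∈ 𝒜 g, ∀ m ∈ C h, ρ a m ∈ C (g * h)

/-- A thin covering is a minimal covering. -/
def IsThinCoveringRho {Hhat A M : Type*} [CommGroup Hhat] [Ring A] [Algebra ℂ A]
    [AddCommGroup M] [Module ℂ M]
    (𝒜 : (Hhat →* ℂˣ) → Submodule ℂ A) (ρ : A →ₐ[ℂ] Module.End ℂ M)
    (C : (Hhat →* ℂˣ) → Submodule ℂ M) : Prop :=
  IsCoveringRho 𝒜 ρ C ∧
    ∀ D : (Hhat →* ℂˣ) → Submodule ℂ M, IsCoveringRho 𝒜 ρ D →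
      (∃ k : Hhat →* ℂˣ, ∀ h, D (h * k) ≤ C h) → ∃ k : Hhat →* ℂˣ, ∀ h, C (h * k) ≤ D h

/-- Burnside's theorem: an irreducible finite-dimensional representation of a `ℂ`-algebra is
surjective onto the full endomorphism algebra. -/
theorem burnside_surjective {B W : Type*} [Ring B] [Algebra ℂ B] [AddCommGroup W] [Module ℂ W]
    [FiniteDimensional ℂ W] (ρ : B →ₐ[ℂ] Module.End ℂ W)
    (hW : Nontrivial W ∧
      ∀ U : Submodule ℂ W, (∀ b : B, ∀ m ∈ U, ρ b m ∈ U) → U = ⊥ ∨ U = ⊤) :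
    Function.Surjective ρ := by
  classical
  obtain ⟨hnt, hU⟩ := hW
  let _ : Module B W := Module.compHom W ρ.toRingHom
  have hsmul : ∀ (b : B) (m : W), b • m = ρ b m := fun _ _ => rfl
  have : IsScalarTower ℂ B W := ⟨fun c b m => by simp [hsmul]⟩
  have : IsSimpleModule B W := by
    refine (isSimpleModule_iff B W).2 { eq_bot_or_eq_top := fun U => ?_ }
    refine (hU (U.restrictScalars ℂ) fun b m hm => U.smul_mem b hm).imp (fun h => ?_) fun h => ?_
    · exact (Submodule.restrictScalars_eq_bot_iff ℂ B W).1 h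
    · exact (Submodule.restrictScalars_eq_top_iff ℂ B W).1 h
  intro X
  let F : Module.End (Module.End B W) W :=
    { toFun := X
      map_add' := X.map_add
      map_smul' := fun e m => by
        obtain ⟨c, rfl⟩ := (IsSimpleModule.algebraMap_end_bijective_of_isAlgClosed ℂ).2 e
        exact X.map_smul c m }
  let β := Module.finBasis ℂ W
  obtain ⟨b, hb⟩ := jacobson_density (R := B) F (Finset.univ.image β)
  refine ⟨b, β.ext fun i => ?_⟩
  exact (hb (β i) (Finset.mem_image_of_mem _ (Finset.mem_univ i))).symm

/-- A joint eigenvector in the span of a family of joint eigenvectors lies in the span of those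
members of the family with the same eigenvalues. -/
theorem mem_span_of_joint_eigenvector {K ι κ W : Type*} [Field K] [AddCommGroup W] [Module K W]
    [Finite κ] (f : κ → Module.End K W) (w : ι → W) (μ : ι → κ → K)
    (hw : ∀ a j, f j (w a) = μ a j • w a) (y : W) (ν : κ → K)
    (hy : ∀ j, f j y = ν j • y) (hspan : y ∈ Submodule.span K (Set.range w)) :
    y ∈ Submodule.span K (w '' {a | ∀ j, μ a j = ν j}) := by
  classical
  cases nonempty_fintype κ
  suffices h : ∀ J : Finset κ, y ∈ Submodule.span K (w '' {a | ∀ j ∈ J, μ a j = ν j}) by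
    simpa using h Finset.univ
  intro J
  induction J using Finset.induction_on with
  | empty => simpa using hspan
  | insert j J _ ih =>
    set good := Submodule.span K (w '' {a | ∀ i ∈ insert j J, μ a i = ν i}) with hgood
    have hgood_le : good ≤ (f j).eigenspace (ν j) := by
      refine Submodule.span_le.2 ?_
      rintro _ ⟨a, ha, rfl⟩
      rw [SetLike.mem_coe, Module.End.mem_eigenspace_iff, hw, ha j (Finset.mem_insert_self _ _)]
    have hle : Submodule.span K (w '' {a | ∀ i ∈ J, μ a i = ν i}) ≤
        good ⊔ ⨆ (c : K) (_ : c ≠ ν j), (f j).eigenspace c := by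
      refine Submodule.span_le.2 ?_
      rintro _ ⟨a, ha, rfl⟩
      by_cases h : μ a j = ν j
      · refine Submodule.mem_sup_left (Submodule.subset_span ⟨a, fun i hi => ?_, rfl⟩)
        rcases Finset.mem_insert.1 hi with rfl | hi
        exacts [h, ha i hi]
      · refine Submodule.mem_sup_right (Submodule.mem_iSup_of_mem (μ a j) ?_)
        exact Submodule.mem_iSup_of_mem h (Module.End.mem_eigenspace_iff.2 (hw a j))
    obtain ⟨y₁, hy₁, y₂, hy₂, rfl⟩ := Submodule.mem_sup.1 (hle ih)
    have h₂ : y₂ ∈ (f j).eigenspace (ν j) := by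
      have := Submodule.sub_mem _ (Module.End.mem_eigenspace_iff.2 (hy j)) (hgood_le hy₁)
      simpa using this
    have h0 : y₂ = 0 :=
      (Submodule.disjoint_def.1 ((f j).eigenspaces_iSupIndep (ν j))) y₂ h₂ hy₂
    simpa [h0] using hy₁

/-- The endomorphisms `Y` with `Y S_j = χ(η_j) S_j Y` for all `j`. -/
def twistedCommutant {G N : Type*} [CommGroup G] [AddCommGroup N] [Module ℂ N] {r : ℕ}
    (η : Fin r → G) (S : Fin r → N ≃ₗ[ℂ] N) (χ : G →* ℂˣ) : Submodule ℂ (Module.End ℂ N) where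
  carrier := {Y | ∀ j u, Y (S j u) = (χ (η j) : ℂ) • S j (Y u)}
  add_mem' := fun hY hZ j u => by simp [hY j u, hZ j u]
  zero_mem' := fun j u => by simp
  smul_mem' := fun c Y hY j u => by simp [hY j u, smul_comm c]

section Torus

variable {G N : Type*} [CommGroup G] [AddCommGroup N] [Module ℂ N] {r : ℕ}
  {η : Fin r → G} {S : Fin r → N ≃ₗ[ℂ] N}

theorem one_mem_twistedCommutant : (1 : Module.End ℂ N) ∈ twistedCommutant η S 1 :=
  fun j u => by simp

theorem mul_mem_twistedCommutant {χ ψ : G →* ℂˣ} {Y Z : Module.End ℂ N}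
    (hY : Y ∈ twistedCommutant η S χ) (hZ : Z ∈ twistedCommutant η S ψ) :
    Y * Z ∈ twistedCommutant η S (χ * ψ) := fun j u => by
  simp [hZ j u, hY j, smul_smul, mul_comm]

theorem symm_mem_twistedCommutant {χ : G →* ℂˣ} {e : N ≃ₗ[ℂ] N}
    (he : (e : Module.End ℂ N) ∈ twistedCommutant η S χ) :
    (e.symm : Module.End ℂ N) ∈ twistedCommutant η S χ⁻¹ := fun j u => by
  have h := he j (e.symm u)
  simp only [LinearEquiv.coe_coe, LinearEquiv.apply_symm_apply] at h ⊢
  rw [LinearEquiv.symm_apply_eq, map_smul, h, smul_smul]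
  simp

theorem exists_smul_one_of_mem_twistedCommutant [FiniteDimensional ℂ N]
    (hN : Nontrivial N ∧ ∀ W : Submodule ℂ N, (∀ i, ∀ u ∈ W, S i u ∈ W) → W = ⊥ ∨ W = ⊤)
    {Y : Module.End ℂ N} (hY : Y ∈ twistedCommutant η S 1) : ∃ c : ℂ, Y = c • 1 := by
  have := hN.1
  obtain ⟨c, hc⟩ := Module.End.exists_eigenvalue Y
  refine ⟨c, ?_⟩
  have hinv : ∀ i, ∀ u ∈ Y.eigenspace c, S i u ∈ Y.eigenspace c := fun i u hu => by
    rw [Module.End.mem_eigenspace_iff] at hu ⊢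
    simp [hY i u, hu]
  rcases hN.2 _ hinv with h | h
  · exact absurd h hc
  · ext u
    exact Module.End.mem_eigenspace_iff.1 (h ▸ Submodule.mem_top : u ∈ Y.eigenspace c)

theorem exists_smul_of_mem_twistedCommutant [FiniteDimensional ℂ N]
    (hN : Nontrivial N ∧ ∀ W : Submodule ℂ N, (∀ i, ∀ u ∈ W, S i u ∈ W) → W = ⊥ ∨ W = ⊤)
    {χ : G →* ℂˣ} {e : N ≃ₗ[ℂ] N} (he : (e : Module.End ℂ N) ∈ twistedCommutant η S χ)
    {Y : Module.End ℂ N} (hY : Y ∈ twistedCommutant η S χ) :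
    ∃ c : ℂ, Y = c • (e : Module.End ℂ N) := by
  have h := mul_mem_twistedCommutant (symm_mem_twistedCommutant he) hY
  rw [show χ⁻¹ * χ = 1 from inv_mul_cancel χ] at h
  obtain ⟨c, hc⟩ := exists_smul_one_of_mem_twistedCommutant hN h
  refine ⟨c, LinearMap.ext fun u => ?_⟩
  have := congr(e ($hc u))
  simpa using this

theorem character_apply_generator {q : Fin r → Fin r → ℂˣ} {γ : (Fin r → ℤ) → (G →* ℂˣ)}
    (hγdef : ∀ a b : Fin r → ℤ, γ a (∏ i, η i ^ b i) = ∏ i, ∏ j, q i j ^ (a i * b j))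
    (a : Fin r → ℤ) (j : Fin r) : γ a (η j) = ∏ i, q i j ^ a i := by
  have := hγdef a (Pi.single j 1)
  simpa [Pi.single_apply, Finset.prod_ite_eq, apply_ite] using this

theorem Sprod_mem_twistedCommutant {q : Fin r → Fin r → ℂˣ}
    (hrel : ∀ i j, ((S i : Module.End ℂ N) * S j) =
        (q i j : ℂ) • ((S j : Module.End ℂ N) * S i))
    {γ : (Fin r → ℤ) → (G →* ℂˣ)}
    (hγdef : ∀ a b : Fin r → ℤ, γ a (∏ i, η i ^ b i) = ∏ i, ∏ j, q i j ^ (a i * b j))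
    (a : Fin r → ℤ) : (Sprod S a : Module.End ℂ N) ∈ twistedCommutant η S (γ a) := by
  intro j u
  let K : Subgroup ((N ≃ₗ[ℂ] N) × ℂˣ) :=
    { carrier := {x | ∀ u, x.1 (S j u) = (x.2 : ℂ) • S j (x.1 u)}
      one_mem' := fun u => by simp
      mul_mem' := fun {x y} hx hy u => by
        have h := hx (y.1 u)
        simp [hy u, h, smul_smul, mul_comm]
      inv_mem' := fun {x} hx u => by
        have h := hx (x.1⁻¹ u)
        have hinv : ∀ w, x.1 (x.1⁻¹ w) = w := fun w => x.1.apply_symm_apply w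
        rw [hinv] at h
        apply x.1.injective
        simp only [Prod.fst_inv, Prod.snd_inv]
        rw [hinv, map_smul, h, smul_smul]
        simp }
  have hK : (List.ofFn fun i => (S i ^ a i, q i j ^ a i)).prod ∈ K := by
    refine K.list_prod_mem fun x hx => ?_
    obtain ⟨i, rfl⟩ := (List.mem_ofFn' _ _).1 hx
    have hi : (S i, q i j) ∈ K := fun u => congr($(hrel i j) u)
    exact K.zpow_mem hi (a i)
  have h1 : (List.ofFn fun i => (S i ^ a i, q i j ^ a i)).prod = (Sprod S a, γ a (η j)) := by
    ext1
    · rw [← MonoidHom.coe_fst, map_list_prod, List.map_ofFn]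
      rfl
    · rw [← MonoidHom.coe_snd, map_list_prod, List.map_ofFn, List.prod_ofFn,
        character_apply_generator hγdef]
      rfl
  rw [h1] at hK
  exact hK u

theorem span_Sprod_eq_top [FiniteDimensional ℂ N]
    (hN : Nontrivial N ∧ ∀ W : Submodule ℂ N, (∀ i, ∀ u ∈ W, S i u ∈ W) → W = ⊥ ∨ W = ⊤)
    {q : Fin r → Fin r → ℂˣ}
    (hrel : ∀ i j, ((S i : Module.End ℂ N) * S j) =
        (q i j : ℂ) • ((S j : Module.End ℂ N) * S i))
    {γ : (Fin r → ℤ) → (G →* ℂˣ)} (hγadd : ∀ a b : Fin r → ℤ, γ (a + b) = γ a * γ b)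
    (hγdef : ∀ a b : Fin r → ℤ, γ a (∏ i, η i ^ b i) = ∏ i, ∏ j, q i j ^ (a i * b j)) :
    Submodule.span ℂ (Set.range fun a => (Sprod S a : Module.End ℂ N)) = ⊤ := by
  set P := Submodule.span ℂ (Set.range fun a => (Sprod S a : Module.End ℂ N)) with hP
  have hSp := Sprod_mem_twistedCommutant hrel hγdef
  have hmem : ∀ {Y : Module.End ℂ N} (a), Y ∈ twistedCommutant η S (γ a) → Y ∈ P := by
    intro Y a hY
    obtain ⟨c, rfl⟩ := exists_smul_of_mem_twistedCommutant hN (hSp a) hY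
    exact P.smul_mem c (Submodule.subset_span ⟨a, rfl⟩)
  have hγ0 : γ 0 = 1 := by
    have := hγadd 0 0
    rw [add_zero] at this
    exact MonoidHom.ext fun x => by simpa using congr($this x)
  have hPmul : P * P ≤ P := by
    rw [hP, Submodule.span_mul_span, Submodule.span_le]
    rintro _ ⟨_, ⟨a, rfl⟩, _, ⟨b, rfl⟩, rfl⟩
    exact hmem (a + b) (hγadd a b ▸ mul_mem_twistedCommutant (hSp a) (hSp b))
  have hP1 : (1 : Module.End ℂ N) ∈ P := hmem 0 (hγ0 ▸ one_mem_twistedCommutant)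
  have hadj : ∀ Y ∈ Algebra.adjoin ℂ (Set.range fun i => (S i : Module.End ℂ N)), Y ∈ P := by
    intro Y hY
    induction hY using Algebra.adjoin_induction with
    | mem x hx =>
      obtain ⟨i, rfl⟩ := hx
      refine hmem (Pi.single i 1) fun j u => ?_
      have hγ : γ (Pi.single i 1) (η j) = q i j := by
        rw [character_apply_generator hγdef, Finset.prod_eq_single i] <;> simp_all
      rw [hγ]
      exact congr($(hrel i j) u)
    | algebraMap c => rw [Algebra.algebraMap_eq_smul_one]; exact P.smul_mem c hP1
    | add _ _ _ _ hx hy => exact P.add_mem hx hy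
    | mul _ _ _ _ hx hy => exact hPmul (Submodule.mul_mem_mul hx hy)
  refine eq_top_iff.2 fun Y _ => ?_
  obtain ⟨Z, rfl⟩ := burnside_surjective
    (Algebra.adjoin ℂ (Set.range fun i => (S i : Module.End ℂ N))).val
    ⟨hN.1, fun U hU => hN.2 U fun i u hu =>
      hU ⟨S i, Algebra.subset_adjoin ⟨i, rfl⟩⟩ u hu⟩ Y
  exact hadj _ Z.2

/-- Every nonzero element of a twisted commutant is a multiple of a torus monomial. -/
theorem eq_zero_or_exists_Sprod [FiniteDimensional ℂ N]
    (hgen : Subgroup.closure (Set.range η) = ⊤)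
    (hN : Nontrivial N ∧ ∀ W : Submodule ℂ N, (∀ i, ∀ u ∈ W, S i u ∈ W) → W = ⊥ ∨ W = ⊤)
    {γ : (Fin r → ℤ) → (G →* ℂˣ)}
    (hSp : ∀ a, (Sprod S a : Module.End ℂ N) ∈ twistedCommutant η S (γ a))
    (htop : Submodule.span ℂ (Set.range fun a => (Sprod S a : Module.End ℂ N)) = ⊤)
    {χ : G →* ℂˣ} {Y : Module.End ℂ N} (hY : Y ∈ twistedCommutant η S χ) :
    Y = 0 ∨ ∃ a, χ = γ a ∧ ∃ c : ℂ, Y = c • (Sprod S a : Module.End ℂ N) := by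
  have hconj : ∀ {ψ : G →* ℂˣ} {Z : Module.End ℂ N}, Z ∈ twistedCommutant η S ψ → ∀ j,
      (S j).symm.conj Z = (ψ (η j) : ℂ) • Z := fun hZ j => by
    ext u
    simp [LinearEquiv.conj_apply, hZ j u]
  have h := mem_span_of_joint_eigenvector
    (fun j => ((S j).symm.conj : Module.End ℂ N →ₗ[ℂ] Module.End ℂ N))
    (fun a => (Sprod S a : Module.End ℂ N)) (fun a j => (γ a (η j) : ℂ))
    (fun a j => hconj (hSp a) j) Y (fun j => (χ (η j) : ℂ)) (fun j => hconj hY j)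
    (htop ▸ Submodule.mem_top)
  rcases Set.eq_empty_or_nonempty {a | ∀ j, (γ a (η j) : ℂ) = χ (η j)} with he | ⟨a, ha⟩
  · left
    simpa [he] using h
  · have hχ : χ = γ a := by
      refine MonoidHom.eq_of_eqOn_dense hgen ?_
      rintro _ ⟨j, rfl⟩
      exact Units.ext (ha j).symm
    exact .inr ⟨a, hχ, exists_smul_of_mem_twistedCommutant hN (hSp a) (hχ ▸ hY)⟩

theorem span_Sprod_apply_eq_top
    (htop : Submodule.span ℂ (Set.range fun a => (Sprod S a : Module.End ℂ N)) = ⊤)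
    {n : N} (hn : n ≠ 0) : Submodule.span ℂ (Set.range fun a => Sprod S a n) = ⊤ := by
  refine eq_top_iff.2 fun u _ => ?_
  obtain ⟨f, hf⟩ := Module.Projective.exists_dual_eq_one ℂ hn
  have h : f.smulRight u ∈ Submodule.span ℂ (Set.range fun a => (Sprod S a : Module.End ℂ N)) :=
    htop ▸ Submodule.mem_top
  have := Submodule.mem_map_of_mem (f := LinearMap.applyₗ (R := ℂ) n) h
  rw [Submodule.map_span, ← Set.range_comp] at this
  simpa [hf, Function.comp_def] using this

end Torus

/-- If the automorphisms `Φ (η j)` are implemented by surjective operators `T j`, then every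
operator in the image of `ρ` of weight `h` for the `T j` is the image of an element of the
`h`-component of `A`. -/
theorem exists_mem_graded_of_intertwines {G A M : Type*} [CommGroup G] [Finite G] [Ring A]
    [Algebra ℂ A] [AddCommGroup M] [Module ℂ M] {r : ℕ} {η : Fin r → G}
    (hgen : Subgroup.closure (Set.range η) = ⊤)
    (ρ : A →ₐ[ℂ] Module.End ℂ M) (Φ : G →* A ≃ₐ[ℂ] A) (𝒜 : (G →* ℂˣ) → Submodule ℂ A)
    (h𝒜 : ∀ (h : G →* ℂˣ) (a : A), a ∈ 𝒜 h ↔ ∀ σ : G, Φ σ a = (h σ : ℂ) • a)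
    (T : Fin r → Module.End ℂ M) (hTsurj : ∀ j, Function.Surjective (T j))
    (hT : ∀ (j : Fin r) (a : A), (T j).comp (ρ a) = (ρ (Φ (η j) a)).comp (T j))
    (h : G →* ℂˣ) (a : A)
    (ha : ∀ j, (T j).comp (ρ a) = (h (η j) : ℂ) • (ρ a).comp (T j)) :
    ∃ b ∈ 𝒜 h, ρ b = ρ a := by
  cases nonempty_fintype G
  have hker : ∀ σ : G, ∀ b : A, ρ b = ρ a → ρ (Φ σ b) = (h σ : ℂ) • ρ b := by
    have hmon : Submonoid.closure (Set.range η) = ⊤ := by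
      rw [← Subgroup.closure_toSubmonoid_of_finite, hgen]; rfl
    intro σ
    have hσ : σ ∈ Submonoid.closure (Set.range η) := hmon ▸ Submonoid.mem_top σ
    induction hσ using Submonoid.closure_induction with
    | mem x hx =>
      obtain ⟨j, rfl⟩ := hx
      intro b hb
      refine LinearMap.ext fun m => ?_
      obtain ⟨m, rfl⟩ := hTsurj j m
      have h1 := congr($(hT j b) m)
      have h2 := congr($(ha j) m)
      rw [← hb] at h2
      simp only [LinearMap.comp_apply, LinearMap.smul_apply] at h1 h2 ⊢
      rw [← h1, h2]
    | one => intro b _; simp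
    | mul x y _ _ hx hy =>
      intro b hb
      have hb' : ρ ((h y : ℂ)⁻¹ • Φ y b) = ρ a := by
        rw [map_smul, hy b hb, smul_smul, inv_mul_cancel₀ (Units.ne_zero _), one_smul, hb]
      have h3 := hx _ hb'
      rw [hb', map_smul, map_smul, inv_smul_eq_iff₀ (Units.ne_zero _)] at h3
      rw [map_mul, AlgEquiv.mul_apply, h3, hb, smul_smul, map_mul, Units.val_mul, mul_comm]
  refine ⟨(Fintype.card G : ℂ)⁻¹ • ∑ σ, (h σ : ℂ)⁻¹ • Φ σ a, (h𝒜 _ _).2 fun τ => ?_, ?_⟩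
  · rw [map_smul, smul_comm]
    congr 1
    rw [map_sum, Finset.smul_sum]
    refine Fintype.sum_equiv (Equiv.mulLeft τ) _ _ fun σ => ?_
    simp only [Equiv.coe_mulLeft, map_mul, map_smul, AlgEquiv.mul_apply, Units.val_mul, smul_smul,
      mul_inv]
    rw [mul_inv_cancel_left₀ (Units.ne_zero _)]
  · have : ∀ σ : G, ρ ((h σ : ℂ)⁻¹ • Φ σ a) = ρ a := fun σ => by
      rw [map_smul, hker σ a rfl, inv_smul_smul₀ (Units.ne_zero _)]
    simp only [map_smul, map_sum, Finset.smul_sum] at this ⊢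
    simp only [this, Finset.sum_const, Finset.card_univ]
    rw [← Nat.cast_smul_eq_nsmul ℂ, smul_smul, mul_inv_cancel₀, one_smul]
    simp

/-- The slice map `N ⊗ V → N` attached to a linear form on `V`. -/
noncomputable def tensorSlice {V : Type*} (N : Type*) [AddCommGroup N] [Module ℂ N]
    [AddCommGroup V] [Module ℂ V] (f : V →ₗ[ℂ] ℂ) : N ⊗[ℂ] V →ₗ[ℂ] N :=
  (TensorProduct.rid ℂ N).toLinearMap ∘ₗ f.lTensor N

section Tensor

variable {N V : Type*} [AddCommGroup N] [Module ℂ N] [AddCommGroup V] [Module ℂ V]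

@[simp]
theorem tensorSlice_tmul (f : V →ₗ[ℂ] ℂ) (u : N) (v : V) :
    tensorSlice N f (u ⊗ₜ v) = f v • u := by
  simp [tensorSlice]

theorem sum_tensorSlice_tmul {ι : Type*} [Fintype ι] (b : Module.Basis ι ℂ V) (z : N ⊗[ℂ] V) :
    ∑ i, tensorSlice N (b.coord i) z ⊗ₜ[ℂ] b i = z := by
  induction z with
  | zero => simp
  | tmul u v =>
    simp only [tensorSlice_tmul, TensorProduct.smul_tmul]
    rw [← TensorProduct.tmul_sum]
    congr 1
    exact b.sum_repr v
  | add x y hx hy =>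
    conv_rhs => rw [← hx, ← hy]
    simp [TensorProduct.add_tmul, Finset.sum_add_distrib]

theorem exists_tensorSlice_ne_zero [FiniteDimensional ℂ V] {z : N ⊗[ℂ] V} (hz : z ≠ 0) :
    ∃ f : V →ₗ[ℂ] ℂ, tensorSlice N f z ≠ 0 := by
  by_contra! h
  refine hz ?_
  rw [← sum_tensorSlice_tmul (Module.finBasis ℂ V) z]
  simp [h]

theorem tensorSlice_map (f : V →ₗ[ℂ] ℂ) (g : Module.End ℂ N) (c : ℂ) (z : N ⊗[ℂ] V) :
    tensorSlice N f (TensorProduct.map g (c • LinearMap.id) z) = c • g (tensorSlice N f z) := by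
  induction z with
  | zero => simp
  | tmul u v => simp [smul_smul]
  | add x y hx hy => simp [hx, hy]

theorem map_smulRight_apply {V' : Type*} [AddCommGroup V'] [Module ℂ V'] (g : Module.End ℂ N)
    (f : V →ₗ[ℂ] ℂ) (v : V') (z : N ⊗[ℂ] V) :
    TensorProduct.map g (f.smulRight v) z = g (tensorSlice N f z) ⊗ₜ[ℂ] v := by
  induction z with
  | zero => simp
  | tmul u w => simp [TensorProduct.smul_tmul]
  | add x y hx hy => simp [hx, hy, TensorProduct.add_tmul]

end Tensor

section Covering

variable {G : Type*} [CommGroup G] [DecidableEq (G →* ℂˣ)] {N : Type*} [AddCommGroup N]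
  [Module ℂ N] {V : (G →* ℂˣ) → Type*} [∀ p, AddCommGroup (V p)] [∀ p, Module ℂ (V p)]
  {r : ℕ} {η : Fin r → G} {S : Fin r → N ≃ₗ[ℂ] N}

theorem torusOp_lof (j : Fin r) (p : G →* ℂˣ) (z : N ⊗[ℂ] V p) :
    torusOp V η S j (lof ℂ (G →* ℂˣ) (fun p => N ⊗[ℂ] V p) p z) =
      lof ℂ (G →* ℂˣ) (fun p => N ⊗[ℂ] V p) p
        (TensorProduct.map (S j : N →ₗ[ℂ] N) ((p (η j) : ℂ) • LinearMap.id) z) := by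
  simp [torusOp, toModule_lof]

theorem torusOp_lof_tmul (j : Fin r) (p : G →* ℂˣ) (u : N) (v : V p) :
    torusOp V η S j (lof ℂ (G →* ℂˣ) (fun p => N ⊗[ℂ] V p) p (u ⊗ₜ v)) =
      (p (η j) : ℂ) • lof ℂ (G →* ℂˣ) (fun p => N ⊗[ℂ] V p) p (S j u ⊗ₜ v) := by
  simp [torusOp_lof]

theorem component_torusOp (j : Fin r) (p : G →* ℂˣ) (m : ⨁ p : G →* ℂˣ, N ⊗[ℂ] V p) :
    component ℂ (G →* ℂˣ) (fun p => N ⊗[ℂ] V p) p (torusOp V η S j m) =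
      TensorProduct.map (S j : N →ₗ[ℂ] N) ((p (η j) : ℂ) • LinearMap.id)
        (component ℂ (G →* ℂˣ) (fun p => N ⊗[ℂ] V p) p m) := by
  induction m using DirectSum.induction_on with
  | zero => simp
  | of q z =>
    rw [← lof_eq_of ℂ, torusOp_lof]
    rcases eq_or_ne q p with rfl | h
    · simp [component.lof_self]
    · simp [component.of, h]
  | add x y hx hy => simp [hx, hy]

theorem torusOp_surjective (j : Fin r) : Function.Surjective (torusOp V η S j) := by
  rw [← LinearMap.range_eq_top, eq_top_iff]
  rintro m -
  induction m using DirectSum.induction_on with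
  | zero => exact zero_mem _
  | of q z =>
    rw [← lof_eq_of ℂ]
    induction z with
    | zero => simp
    | tmul u v =>
      refine ⟨(q (η j) : ℂ)⁻¹ • lof ℂ _ (fun p => N ⊗[ℂ] V p) q ((S j).symm u ⊗ₜ v), ?_⟩
      rw [map_smul, torusOp_lof_tmul]
      simp
    | add x y hx hy => rw [map_add]; exact add_mem hx hy
  | add x y hx hy => exact add_mem hx hy

/-- The operator `Y ⊗ φ` from the `p`-component to the `p'`-component. -/
noncomputable def blockOp {p p' : G →* ℂˣ} (Y : Module.End ℂ N) (φ : V p →ₗ[ℂ] V p') :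
    Module.End ℂ (⨁ p : G →* ℂˣ, N ⊗[ℂ] V p) :=
  lof ℂ (G →* ℂˣ) (fun p => N ⊗[ℂ] V p) p' ∘ₗ TensorProduct.map Y φ ∘ₗ
    component ℂ (G →* ℂˣ) (fun p => N ⊗[ℂ] V p) p

theorem torusOp_comp_blockOp {χ p p' : G →* ℂˣ} {Y : Module.End ℂ N}
    (hY : Y ∈ twistedCommutant η S χ) (φ : V p →ₗ[ℂ] V p') (j : Fin r) :
    (torusOp V η S j).comp (blockOp Y φ) =
      ((p' * χ⁻¹ * p⁻¹) (η j) : ℂ) • (blockOp Y φ).comp (torusOp V η S j) := by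
  refine LinearMap.ext fun m => ?_
  simp only [blockOp, LinearMap.comp_apply, LinearMap.smul_apply, torusOp_lof, component_torusOp]
  rw [← LinearMap.map_smul]
  congr 1
  generalize component ℂ (G →* ℂˣ) (fun p => N ⊗[ℂ] V p) p m = z
  induction z with
  | zero => simp
  | tmul u v =>
    simp only [TensorProduct.map_tmul, LinearEquiv.coe_coe, hY j u, LinearMap.smul_apply,
      LinearMap.id_apply, map_smul, TensorProduct.tmul_smul, ← TensorProduct.smul_tmul', smul_smul]
    congr 1
    simp
    field_simp
  | add x y hx hy => simp only [map_add, smul_add, hx, hy]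

variable {γ : (Fin r → ℤ) → (G →* ℂˣ)}

theorem lof_Sprod_tmul_mem_thinFam (n : N) {h p : G →* ℂˣ} (a : Fin r → ℤ) (hp : p = h * γ a)
    (v : V p) :
    lof ℂ (G →* ℂˣ) (fun p => N ⊗[ℂ] V p) p (Sprod S a n ⊗ₜ v) ∈ thinFam V S γ n h := by
  subst hp
  exact Submodule.mem_iSup_of_mem a ⟨v, rfl⟩

theorem thinFam_le_iff {n : N} {h : G →* ℂˣ} {U : Submodule ℂ (⨁ p : G →* ℂˣ, N ⊗[ℂ] V p)} :
    thinFam V S γ n h ≤ U ↔ ∀ (a : Fin r → ℤ) (v : V (h * γ a)),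
      lof ℂ (G →* ℂˣ) (fun p => N ⊗[ℂ] V p) (h * γ a) (Sprod S a n ⊗ₜ v) ∈ U := by
  rw [thinFam, iSup_le_iff]
  refine forall_congr' fun a => ⟨fun H v => H ⟨v, rfl⟩, ?_⟩
  rintro H _ ⟨v, rfl⟩
  exact H v

theorem lof_tmul_mem_thinFam [FiniteDimensional ℂ N]
    (hgen : Subgroup.closure (Set.range η) = ⊤)
    (hN : Nontrivial N ∧ ∀ W : Submodule ℂ N, (∀ i, ∀ u ∈ W, S i u ∈ W) → W = ⊥ ∨ W = ⊤)
    (hSp : ∀ a, (Sprod S a : Module.End ℂ N) ∈ twistedCommutant η S (γ a))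
    (htop : Submodule.span ℂ (Set.range fun a => (Sprod S a : Module.End ℂ N)) = ⊤)
    (n : N) {h p : G →* ℂˣ} {Y : Module.End ℂ N} (hY : Y ∈ twistedCommutant η S (p * h⁻¹))
    (v : V p) :
    lof ℂ (G →* ℂˣ) (fun p => N ⊗[ℂ] V p) p (Y n ⊗ₜ v) ∈ thinFam V S γ n h := by
  rcases eq_zero_or_exists_Sprod hgen hN hSp htop hY with rfl | ⟨a, ha, c, rfl⟩
  · simp
  · rw [LinearMap.smul_apply, ← TensorProduct.smul_tmul', map_smul]
    refine Submodule.smul_mem _ c (lof_Sprod_tmul_mem_thinFam n a ?_ v)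
    rw [← ha]
    ext x
    simp

theorem iSup_thinFam
    (htop : Submodule.span ℂ (Set.range fun a => (Sprod S a : Module.End ℂ N)) = ⊤)
    {n : N} (hn : n ≠ 0) : ⨆ h, thinFam V S γ n h = ⊤ := by
  rw [eq_top_iff]
  rintro m -
  induction m using DirectSum.induction_on with
  | zero => exact zero_mem _
  | of p z =>
    rw [← lof_eq_of ℂ]
    induction z with
    | zero => simp
    | tmul u v =>
      have hu : u ∈ Submodule.span ℂ (Set.range fun a => Sprod S a n) :=
        span_Sprod_apply_eq_top htop hn ▸ Submodule.mem_top
      induction hu using Submodule.span_induction with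
      | mem x hx =>
        obtain ⟨a, rfl⟩ := hx
        refine Submodule.mem_iSup_of_mem (p * (γ a)⁻¹)
          (lof_Sprod_tmul_mem_thinFam n a ?_ v)
        ext x
        simp
      | zero => simp
      | add x y _ _ hx hy => rw [TensorProduct.add_tmul, map_add]; exact add_mem hx hy
      | smul c x _ hx =>
        rw [← TensorProduct.smul_tmul', map_smul]; exact Submodule.smul_mem _ c hx
    | add x y hx hy => rw [map_add]; exact add_mem hx hy
  | add x y hx hy => exact add_mem hx hy

theorem apply_mem_thinFam [Finite G] [FiniteDimensional ℂ N] [∀ p, FiniteDimensional ℂ (V p)]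
    (hgen : Subgroup.closure (Set.range η) = ⊤)
    (hN : Nontrivial N ∧ ∀ W : Submodule ℂ N, (∀ i, ∀ u ∈ W, S i u ∈ W) → W = ⊥ ∨ W = ⊤)
    (hSp : ∀ a, (Sprod S a : Module.End ℂ N) ∈ twistedCommutant η S (γ a))
    (htop : Submodule.span ℂ (Set.range fun a => (Sprod S a : Module.End ℂ N)) = ⊤)
    (n : N) {g h : G →* ℂˣ} {X : Module.End ℂ (⨁ p : G →* ℂˣ, N ⊗[ℂ] V p)}
    (hX : ∀ j, (torusOp V η S j).comp X = (g (η j) : ℂ) • X.comp (torusOp V η S j))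
    {m : ⨁ p : G →* ℂˣ, N ⊗[ℂ] V p} (hm : m ∈ thinFam V S γ n h) :
    X m ∈ thinFam V S γ n (g * h) := by
  classical
  suffices H : thinFam V S γ n h ≤ (thinFam V S γ n (g * h)).comap X from H hm
  rw [thinFam_le_iff]
  intro a v
  rw [Submodule.mem_comap]
  generalize hp : h * γ a = p at v
  set y := X (lof ℂ (G →* ℂˣ) (fun p => N ⊗[ℂ] V p) p (Sprod S a n ⊗ₜ v)) with hy
  rw [← DirectSum.sum_support_of y]
  refine Submodule.sum_mem _ fun p' _ => ?_
  rw [← lof_eq_of ℂ, ← sum_tensorSlice_tmul (Module.finBasis ℂ (V p')) (y p'), map_sum]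
  refine Submodule.sum_mem _ fun i _ => ?_
  set f := (Module.finBasis ℂ (V p')).coord i
  let Y : Module.End ℂ N := tensorSlice N f ∘ₗ component ℂ (G →* ℂˣ) (fun p => N ⊗[ℂ] V p) p' ∘ₗ
    X ∘ₗ lof ℂ (G →* ℂˣ) (fun p => N ⊗[ℂ] V p) p ∘ₗ (TensorProduct.mk ℂ N (V p)).flip v
  have hY : Y ∈ twistedCommutant η S (p' * g⁻¹ * p⁻¹) := by
    intro j u
    have h1 := congr(tensorSlice N f (component ℂ (G →* ℂˣ) (fun p => N ⊗[ℂ] V p) p'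
      ($(hX j) (lof ℂ (G →* ℂˣ) (fun p => N ⊗[ℂ] V p) p (u ⊗ₜ v)))))
    simp only [LinearMap.comp_apply, LinearMap.smul_apply, component_torusOp, torusOp_lof_tmul,
      tensorSlice_map, map_smul] at h1
    change (p' (η j) : ℂ) • S j (Y u) = (g (η j) : ℂ) • (p (η j) : ℂ) • Y (S j u) at h1
    rw [smul_smul, ← inv_smul_eq_iff₀ (by simp), smul_smul] at h1
    rw [← h1]
    congr 1
    simp
    ring
  have hYS := mul_mem_twistedCommutant hY (hSp a)
  have hχ : p' * g⁻¹ * p⁻¹ * γ a = p' * (g * h)⁻¹ := by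
    ext x
    simp [← hp]
    field_simp
  rw [hχ] at hYS
  exact lof_tmul_mem_thinFam hgen hN hSp htop n hYS _

/-- Every nonzero vector of a member of a covering produces a family `thinFam` contained in the
covering up to a shift. -/
theorem exists_thinFam_le [∀ p, FiniteDimensional ℂ (V p)]
    (hSp : ∀ a, (Sprod S a : Module.End ℂ N) ∈ twistedCommutant η S (γ a))
    {D : (G →* ℂˣ) → Submodule ℂ (⨁ p : G →* ℂˣ, N ⊗[ℂ] V p)}
    (hD : ∀ (g h : G →* ℂˣ) (X : Module.End ℂ (⨁ p : G →* ℂˣ, N ⊗[ℂ] V p)),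
      (∀ j, (torusOp V η S j).comp X = (g (η j) : ℂ) • X.comp (torusOp V η S j)) →
        ∀ m ∈ D h, X m ∈ D (g * h))
    (hne : ⨆ h, D h ≠ ⊥) : ∃ n : N, n ≠ 0 ∧ ∃ c, ∀ h, thinFam V S γ n (h * c) ≤ D h := by
  obtain ⟨h₀, hh₀⟩ : ∃ h, D h ≠ ⊥ := by
    by_contra! H
    exact hne (by simp [H])
  obtain ⟨m, hm, hm0⟩ := (Submodule.ne_bot_iff _).1 hh₀
  obtain ⟨p₀, hp₀⟩ : ∃ p, m p ≠ 0 := by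
    by_contra! H
    exact hm0 (DFinsupp.ext H)
  obtain ⟨f, hf⟩ := exists_tensorSlice_ne_zero hp₀
  refine ⟨_, hf, h₀⁻¹ * p₀, fun h => thinFam_le_iff.2 fun a v => ?_⟩
  have h1 := hD _ h₀ _ (torusOp_comp_blockOp (hSp a) (f.smulRight v)) m hm
  have h2 : h * (h₀⁻¹ * p₀) * γ a * (γ a)⁻¹ * p₀⁻¹ * h₀ = h := by
    ext x
    simp
    field_simp
  rw [h2] at h1
  simp only [blockOp, LinearMap.comp_apply, map_smulRight_apply] at h1
  exact h1

/-- The members of the families attached to two nonzero vectors are related by an operator. -/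
theorem exists_thinFam_le_map [FiniteDimensional ℂ N]
    (hN : Nontrivial N ∧ ∀ W : Submodule ℂ N, (∀ i, ∀ u ∈ W, S i u ∈ W) → W = ⊥ ∨ W = ⊤)
    (hSp : ∀ a, (Sprod S a : Module.End ℂ N) ∈ twistedCommutant η S (γ a))
    {n : N} (hn : n ≠ 0) (n' : N) (h : G →* ℂˣ) :
    ∃ X : Module.End ℂ (⨁ p : G →* ℂˣ, N ⊗[ℂ] V p),
      thinFam V S γ n' h ≤ (thinFam V S γ n h).map X := by
  have key : ∀ p : G →* ℂˣ, ∃ g : Module.End ℂ N,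
      ∀ a, p = h * γ a → g (Sprod S a n) = Sprod S a n' := by
    intro p
    by_cases hp : ∃ a₀, p = h * γ a₀
    · obtain ⟨a₀, rfl⟩ := hp
      obtain ⟨f, hf⟩ := Module.Projective.exists_dual_eq_one ℂ hn
      refine ⟨(Sprod S a₀ : Module.End ℂ N) * f.smulRight n' *
        ((Sprod S a₀).symm : Module.End ℂ N), fun a ha => ?_⟩
      have hγ : γ a = γ a₀ := by
        ext x
        have := congr(($ha x : ℂ))
        simpa using this.symm
      obtain ⟨c, hc⟩ := exists_smul_of_mem_twistedCommutant hN (hSp a₀) (hγ ▸ hSp a)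
      have hc' : ∀ u, Sprod S a u = c • Sprod S a₀ u := fun u => congr($hc u)
      simp [hc', hf]
    · exact ⟨0, fun a ha => absurd ⟨a, ha⟩ hp⟩
  choose g hg using key
  refine ⟨DirectSum.toModule ℂ _ _ fun p => lof ℂ (G →* ℂˣ) (fun p => N ⊗[ℂ] V p) p ∘ₗ
    (g p).rTensor (V p), thinFam_le_iff.2 fun a v => ?_⟩
  refine ⟨_, lof_Sprod_tmul_mem_thinFam n a rfl v, ?_⟩
  simp [toModule_lof, hg _ a rfl]

theorem thinFam_eq_of_le [Finite G] [FiniteDimensional ℂ N] [∀ p, FiniteDimensional ℂ (V p)]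
    (hN : Nontrivial N ∧ ∀ W : Submodule ℂ N, (∀ i, ∀ u ∈ W, S i u ∈ W) → W = ⊥ ∨ W = ⊤)
    (hSp : ∀ a, (Sprod S a : Module.End ℂ N) ∈ twistedCommutant η S (γ a))
    {n n' : N} (hn : n ≠ 0) (hn' : n' ≠ 0) {c : G →* ℂˣ}
    (hle : ∀ h, thinFam V S γ n' (h * c) ≤ thinFam V S γ n h) (h : G →* ℂˣ) :
    thinFam V S γ n' (h * c) = thinFam V S γ n h := by
  cases nonempty_fintype (G →* ℂˣ)
  have hfin : ∀ {n n' : N}, n ≠ 0 → ∀ h, Module.finrank ℂ (thinFam V S γ n' h) ≤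
      Module.finrank ℂ (thinFam V S γ n h) := by
    intro n n' hn h
    obtain ⟨X, hX⟩ := exists_thinFam_le_map (V := V) hN hSp hn n' h
    exact (Submodule.finrank_mono hX).trans (Submodule.finrank_map_le _ _)
  have hsum : ∑ h, Module.finrank ℂ (thinFam V S γ n' (h * c)) =
      ∑ h, Module.finrank ℂ (thinFam V S γ n h) := by
    refine (Fintype.sum_equiv (Equiv.mulRight c) _
      (fun h => Module.finrank ℂ (thinFam V S γ n' h)) fun _ => rfl).trans ?_
    exact Finset.sum_congr rfl fun h _ => le_antisymm (hfin hn h) (hfin hn' h)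
  exact Submodule.eq_of_le_of_finrank_eq (hle h)
    ((Finset.sum_eq_sum_iff_of_le fun h _ => Submodule.finrank_mono (hle h)).1 hsum h
      (Finset.mem_univ h))

theorem thinFam_eq_of_span_eq {n n' : N} (hspan : Submodule.span ℂ {n} = Submodule.span ℂ {n'})
    (h : G →* ℂˣ) : thinFam V S γ n h = thinFam V S γ n' h := by
  have key : ∀ {n n' : N}, n ∈ Submodule.span ℂ {n'} →
      thinFam V S γ n h ≤ thinFam V S γ n' h := by
    intro n n' hn
    obtain ⟨c, rfl⟩ := Submodule.mem_span_singleton.1 hn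
    refine thinFam_le_iff.2 fun a v => ?_
    rw [map_smul, ← TensorProduct.smul_tmul', map_smul]
    exact Submodule.smul_mem _ c (lof_Sprod_tmul_mem_thinFam n' a rfl v)
  exact le_antisymm (key (hspan ▸ Submodule.mem_span_singleton_self n))
    (key (hspan ▸ Submodule.mem_span_singleton_self n'))

end Covering

/-- Theorem 3.9 (Billig–Lau): let `M` be a finite-dimensional simple module
over a ℂ-algebra `A` (action `ρ`), `Ĥ` a finite abelian group of automorphisms
of `A` generated by `η₁, …, η_r` and implemented on `M` by operators `T_j`
generating a cyclotomic quantum torus, with isotypic decomposition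
`M = ⊕_{h∈H} N ⊗ V^h` (`N` a simple torus module, `H = Hom(Ĥ,ℂ*)`, `T_j`
acting as `S_j ⊗ h(η_j)`), and `γ : ℤ^r → H` the associated homomorphism.
Then, up to equivalence, the thin `H`-coverings of `M` are parametrized by
one-dimensional subspaces of `N`: for every nonzero `n ∈ N` the family
`M_h = Σ_{a∈ℤ^r} T^a(n) ⊗ V^{h·γ(a)}` is a thin `H`-covering of `M`; every
thin `H`-covering of `M` is equivalent to one of this form; and the covering
attached to `n` depends only on the line `ℂn`. -/
theorem thin_H_coverings_classification
    {Hhat : Type*} [CommGroup Hhat] [Finite Hhat] [DecidableEq (Hhat →* ℂˣ)]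
    {N : Type*} [AddCommGroup N] [Module ℂ N] [FiniteDimensional ℂ N]
    (V : (Hhat →* ℂˣ) → Type*) [∀ p, AddCommGroup (V p)] [∀ p, Module ℂ (V p)]
    [∀ p, FiniteDimensional ℂ (V p)]
    {r : ℕ} (η : Fin r → Hhat) (hgen : Subgroup.closure (Set.range η) = ⊤)
    (S : Fin r → N ≃ₗ[ℂ] N) (q : Fin r → Fin r → ℂˣ)
    (hq1 : ∀ i, q i i = 1) (hqinv : ∀ i j, q i j = (q j i)⁻¹)
    (hqroot : ∀ i j, ∃ m : ℕ, 0 < m ∧ q i j ^ m = 1)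
    (hrel : ∀ i j, ((S i : Module.End ℂ N) * S j) =
        (q i j : ℂ) • ((S j : Module.End ℂ N) * S i))
    (hNsimple : Nontrivial N ∧
      ∀ W : Submodule ℂ N, (∀ i, ∀ u ∈ W, S i u ∈ W) → W = ⊥ ∨ W = ⊤)
    (γ : (Fin r → ℤ) → (Hhat →* ℂˣ))
    (hγadd : ∀ a b : Fin r → ℤ, γ (a + b) = γ a * γ b)
    (hγdef : ∀ a b : Fin r → ℤ, γ a (∏ i, η i ^ b i) = ∏ i, ∏ j, q i j ^ (a i * b j))
    {A : Type*} [Ring A] [Algebra ℂ A]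
    (ρ : A →ₐ[ℂ] Module.End ℂ (⨁ p : Hhat →* ℂˣ, N ⊗[ℂ] V p))
    (Φ : Hhat →* A ≃ₐ[ℂ] A)
    (𝒜 : (Hhat →* ℂˣ) → Submodule ℂ A)
    (h𝒜 : ∀ (h : Hhat →* ℂˣ) (a : A), a ∈ 𝒜 h ↔ ∀ σ : Hhat, Φ σ a = (h σ : ℂ) • a)
    (hT : ∀ (j : Fin r) (a : A),
      (torusOp V η S j).comp (ρ a) = (ρ (Φ (η j) a)).comp (torusOp V η S j))
    (hMsimple : Nontrivial (⨁ p : Hhat →* ℂˣ, N ⊗[ℂ] V p) ∧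
      ∀ W : Submodule ℂ (⨁ p : Hhat →* ℂˣ, N ⊗[ℂ] V p),
        (∀ a : A, ∀ m ∈ W, ρ a m ∈ W) → W = ⊥ ∨ W = ⊤) :
    (∀ n : N, n ≠ 0 → IsThinCoveringRho 𝒜 ρ (thinFam V S γ n)) ∧
    (∀ C : (Hhat →* ℂˣ) → Submodule ℂ (⨁ p : Hhat →* ℂˣ, N ⊗[ℂ] V p),
      IsThinCoveringRho 𝒜 ρ C →
        ∃ n : N, n ≠ 0 ∧ ∃ k : Hhat →* ℂˣ, ∀ h, C (h * k) = thinFam V S γ n h) ∧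
    (∀ n n' : N, n ≠ 0 → n' ≠ 0 →
      Submodule.span ℂ {n} = Submodule.span ℂ {n'} →
        ∀ h, thinFam V S γ n h = thinFam V S γ n' h) := by

  have hSp := Sprod_mem_twistedCommutant hrel hγdef
  have htop := span_Sprod_eq_top hNsimple hrel hγadd hγdef
  have hcov : ∀ n : N, n ≠ 0 → IsCoveringRho 𝒜 ρ (thinFam V S γ n) := by
    refine fun n hn => ⟨iSup_thinFam htop hn, fun g h a ha m hm => ?_⟩
    refine apply_mem_thinFam hgen hNsimple hSp htop n (fun j => ?_) hm
    rw [hT, (h𝒜 g a).1 ha, map_smul, LinearMap.smul_comp]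
  have hle : ∀ D : (Hhat →* ℂˣ) → Submodule ℂ (⨁ p : Hhat →* ℂˣ, N ⊗[ℂ] V p),
      IsCoveringRho 𝒜 ρ D → ∃ n : N, n ≠ 0 ∧ ∃ c, ∀ h, thinFam V S γ n (h * c) ≤ D h := by
    refine fun D hD => exists_thinFam_le hSp (fun g h X hX m hm => ?_) ?_
    · obtain ⟨a, rfl⟩ := burnside_surjective ρ hMsimple X
      obtain ⟨b, hb, hba⟩ := exists_mem_graded_of_intertwines hgen ρ Φ 𝒜 h𝒜 (torusOp V η S)
        torusOp_surjective hT g a hX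
      exact hba ▸ hD.2 g h b hb m hm
    · rw [hD.1]
      have := hMsimple.1
      exact top_ne_bot
  refine ⟨fun n hn => ⟨hcov n hn, fun D hD ⟨k, hk⟩ => ?_⟩, fun C hC => ?_,
    fun n n' _ _ hspan h => thinFam_eq_of_span_eq hspan h⟩
  · obtain ⟨n', hn', c, hc⟩ := hle D hD
    have hchain : ∀ h, thinFam V S γ n' (h * (k * c)) ≤ thinFam V S γ n h := fun h =>
      (mul_assoc h k c ▸ hc (h * k)).trans (hk h)
    refine ⟨k⁻¹, fun h => ?_⟩
    rw [← thinFam_eq_of_le hNsimple hSp hn hn' hchain]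
    have hkc : h * k⁻¹ * (k * c) = h * c := by
      ext x
      simp
    exact hkc ▸ hc h
  · obtain ⟨n, hn, c, hc⟩ := hle C hC.1
    obtain ⟨k, hk⟩ := hC.2 _ (hcov n hn) ⟨c, hc⟩
    have hchain : ∀ h, thinFam V S γ n (h * (k * c)) ≤ thinFam V S γ n h := fun h =>
      (mul_assoc h k c ▸ hc (h * k)).trans (hk h)
    refine ⟨n, hn, k, fun h => le_antisymm (hk h) ?_⟩
    rw [← thinFam_eq_of_le hNsimple hSp hn hn hchain]
    exact mul_assoc h k c ▸ hc (h * k)
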